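/- Let p be a prime with p ≡ 1 (mod 3), let L, M be positive integers with 4p = L² + 27M², and let q ≥ 5 be a prime with q ≠ p and q ≡ 2 or 5 (mod 7). Then q^{(p−1)/3} ≡ −(L + 3M)·(6M)⁻¹ (mod p) if and only if there exists an integer t such that (t³ − t² − 9t + 1)·L ≡ (t³ + 27t² − 9t − 27)·M (mod q). -/

import Mathlib

/-!
Let `π ∈ ℤ[ω]` be the primary prime over `p` and `χ` its cubic residue character, so that the Jacobi
sum `J(χ, χ)` is `±π`. If `G` and `G'` are the Gauss sums of `χ` and `χ⁻¹` in characteristic `q`,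
then `(G / G') ^ 3 = π / π̄`, while the Frobenius at `q` gives `(G / G') ^ (q* - 1) = χ(q)`, where
`q* = ±q ≡ 1 (mod 3)`. Hence `(π / π̄) ^ ((q* - 1) / 3) = χ(q)` in `𝔽̄_q`.

Two primes `p`, `p'` have the same residue character at `q` exactly when `z = π̄ π'` satisfies
`(z̄ / z) ^ ((q* - 1) / 3) = 1`, that is, when `z̄ / z` is the cube of some `v` with `v ^ q* = v`.
Such `v ≠ 0, 1` are the values `(t - √-3) / (t + √-3)` with `t ∈ 𝔽_q`, which turns the condition
into a cubic congruence for `t`. The rule is the case `p' = 7`, `π' = 2 + 3ω`, for which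
`L = M = 1` and `χ'(q) = ω` when `q ≡ ±2 (mod 7)`.
-/

section GaussSum

variable {F K : Type*} [Field F] [Fintype F] [Field K] {q : ℕ} [Fact q.Prime] [CharP K q]
  {χ : MulChar F K} {n : ℤ}

theorem gaussSum_pow_char (hq : (q : F) ≠ 0) (χ : MulChar F K) (ψ : AddChar F K) :
    gaussSum χ ψ ^ q = (χ ^ q)⁻¹ q * gaussSum (χ ^ q) ψ := by
  have hunit := hq.isUnit
  rw [gaussSum_frob, AddChar.pow_mulShift, ← hunit.unit_spec, gaussSum_mulShift_eq]

theorem card_ne_zero_of_natCast_ne_zero (K : Type*) [Field K] [CharP K q] (hq : (q : F) ≠ 0) :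
    (Fintype.card F : K) ≠ 0 := by
  obtain ⟨n, hp, hcard⟩ := FiniteField.card F (ringChar F)
  rw [hcard, Ne, CharP.cast_eq_zero_iff K q]
  intro hdvd
  have hqp := (Nat.prime_dvd_prime_iff_eq Fact.out hp).1 (Nat.Prime.dvd_of_dvd_pow Fact.out hdvd)
  exact hq (hqp ▸ CharP.cast_eq_zero F (ringChar F))

theorem gaussSum_div_gaussSum_inv_pow_three (hq : (q : F) ≠ 0) (hχ : χ ^ 3 = 1) (hχ1 : χ ≠ 1)
    {ψ : AddChar F K} (hψ : ψ.IsPrimitive) :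
    (gaussSum χ ψ / gaussSum χ⁻¹ ψ) ^ 3 = jacobiSum χ χ / jacobiSum χ⁻¹ χ⁻¹ := by
  have hcard := card_ne_zero_of_natCast_ne_zero K hq
  have hsq : χ * χ = χ⁻¹ := by rw [eq_inv_iff_mul_eq_one, ← hχ, pow_succ, sq]
  have hsq_inv : χ⁻¹ * χ⁻¹ = χ := by rw [← mul_inv, hsq, inv_inv]
  have hG := gaussSum_ne_zero_of_nontrivial hcard hχ1 hψ
  have hG_inv := gaussSum_ne_zero_of_nontrivial hcard (inv_ne_one.2 hχ1) hψ
  rw [jacobiSum_eq_gaussSum_mul_gaussSum_div_gaussSum hcard (hsq ▸ inv_ne_one.2 hχ1) hψ,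
    jacobiSum_eq_gaussSum_mul_gaussSum_div_gaussSum hcard (hsq_inv.symm ▸ hχ1) hψ, hsq, hsq_inv]
  field_simp

theorem gaussSum_div_gaussSum_inv_zpow (hq : (q : F) ≠ 0) (hχ : χ ^ 3 = 1) (hχ1 : χ ≠ 1)
    {ψ : AddChar F K} (hψ : ψ.IsPrimitive) (hn : 3 * n + 1 = q ∨ 3 * n + 1 = -q) :
    (gaussSum χ ψ / gaussSum χ⁻¹ ψ) ^ (3 * n) = χ q := by
  have hcard := card_ne_zero_of_natCast_ne_zero K hq
  have hG := gaussSum_ne_zero_of_nontrivial hcard hχ1 hψ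
  have hG_inv := gaussSum_ne_zero_of_nontrivial hcard (inv_ne_one.2 hχ1) hψ
  have hχq : χ q ≠ 0 := (hq.isUnit.map χ).ne_zero
  have hχq_inv : χ⁻¹ q = (χ q)⁻¹ := MulChar.inv_apply_eq_inv' χ _
  have hχq_cube : χ q ^ 3 = 1 := by
    rw [← MulChar.pow_apply' _ three_ne_zero, hχ, MulChar.one_apply hq.isUnit]
  have hχ_zpow : χ ^ (3 * n + 1) = χ := by
    rw [zpow_add_one, zpow_mul, zpow_ofNat, hχ, one_zpow, one_mul]
  suffices h : (gaussSum χ ψ / gaussSum χ⁻¹ ψ) ^ (3 * n + 1) =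
      χ q * (gaussSum χ ψ / gaussSum χ⁻¹ ψ) by
    rw [zpow_add_one₀ (div_ne_zero hG hG_inv)] at h
    exact mul_right_cancel₀ (div_ne_zero hG hG_inv) h
  rcases hn with hn | hn <;> rw [hn] at hχ_zpow ⊢
  · rw [zpow_natCast] at hχ_zpow ⊢
    rw [div_pow, gaussSum_pow_char hq, gaussSum_pow_char hq, inv_pow, hχ_zpow, inv_inv, hχq_inv]
    field_simp
    exact hχq_cube.symm
  · rw [zpow_neg, zpow_natCast, inv_eq_iff_eq_inv] at hχ_zpow
    rw [zpow_neg, zpow_natCast, div_pow, inv_div, gaussSum_pow_char hq, gaussSum_pow_char hq]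
    simp only [inv_pow, hχ_zpow, inv_inv, hχq_inv]
    field_simp
    exact hχq_cube.symm

theorem jacobiSum_div_jacobiSum_inv_zpow (hq : (q : F) ≠ 0) (hχ : χ ^ 3 = 1) (hχ1 : χ ≠ 1)
    (hn : 3 * n + 1 = q ∨ 3 * n + 1 = -q) :
    (jacobiSum χ χ / jacobiSum χ⁻¹ χ⁻¹) ^ n = χ q := by
  have hchar : ringChar K ≠ ringChar F := by
    rw [ringChar.eq K q]
    rintro rfl
    exact hq (CharP.cast_eq_zero F (ringChar F))
  let ψ := AddChar.FiniteField.primitiveChar F K hchar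
  let i := algebraMap K (CyclotomicField ψ.n K)
  have : CharP (CyclotomicField ψ.n K) q := charP_of_injective_algebraMap i.injective q
  have hχ' : (χ.ringHomComp i) ^ 3 = 1 := by
    rw [MulChar.ringHomComp_pow, hχ, MulChar.ringHomComp_one]
  have hχ1' := (MulChar.ringHomComp_ne_one_iff i.injective).2 hχ1
  apply i.injective
  rw [map_zpow₀, map_div₀, ← jacobiSum_ringHomComp, ← jacobiSum_ringHomComp,
    ← MulChar.ringHomComp_inv, ← gaussSum_div_gaussSum_inv_pow_three hq hχ' hχ1' ψ.prim,
    ← zpow_natCast, ← zpow_mul]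
  exact gaussSum_div_gaussSum_inv_zpow hq hχ' hχ1' ψ.prim hn

end GaussSum

theorem sum_eval_eq_zero_of_natDegree_lt {F : Type*} [Field F] [Fintype F] {P : Polynomial F}
    (hP : P.natDegree < Fintype.card F - 1) : ∑ a : F, P.eval a = 0 := by
  simp_rw [Polynomial.eval_eq_sum_range]
  rw [Finset.sum_comm]
  refine Finset.sum_eq_zero fun i hi => ?_
  rw [← Finset.mul_sum, FiniteField.sum_pow_lt_card_sub_one _ _ (by grind), mul_zero]

theorem isPrimitiveRoot_three_iff {R : Type*} [CommRing R] [IsDomain R] (h3 : (3 : R) ≠ 0)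
    {x : R} : IsPrimitiveRoot x 3 ↔ x ^ 2 + x + 1 = 0 := by
  have : NeZero ((3 : ℕ) : R) := ⟨mod_cast h3⟩
  simp [← Polynomial.isRoot_cyclotomic_iff, Polynomial.cyclotomic_three]

/-- The ring `ℤ[ω]` of Eisenstein integers, where `ω ^ 2 = -1 - ω`. -/
abbrev EisensteinInt : Type := QuadraticAlgebra ℤ (-1) (-1)

namespace EisensteinInt

open QuadraticAlgebra

theorem omega_sq_add_omega_add_one : (ω : EisensteinInt) ^ 2 + ω + 1 = 0 := by
  rw [sq]
  ext <;> simp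

theorem norm_eq (z : EisensteinInt) : norm z = z.re ^ 2 - z.re * z.im + z.im ^ 2 := by
  rw [norm_def]
  ring

theorem four_mul_norm (z : EisensteinInt) :
    4 * norm z = (2 * z.re - z.im) ^ 2 + 3 * z.im ^ 2 := by
  rw [norm_eq]
  ring

theorem re_star_mul (x y : EisensteinInt) :
    (star x * y).re = (x.re - x.im) * y.re + x.im * y.im := by
  rw [re_mul, re_star, im_star]
  ring

theorem im_star_mul (x y : EisensteinInt) : (star x * y).im = x.re * y.im - x.im * y.re := by
  rw [im_mul, re_star, im_star]
  ring

theorem norm_nonneg (z : EisensteinInt) : 0 ≤ norm z := by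
  linarith [four_mul_norm z, sq_nonneg (2 * z.re - z.im), sq_nonneg z.im]

theorem eq_zero_of_norm_eq_zero {z : EisensteinInt} (hz : norm z = 0) : z = 0 := by
  have h4 := four_mul_norm z
  have him : z.im = 0 := by nlinarith [sq_nonneg (2 * z.re - z.im), sq_nonneg z.im]
  have hre : z.re = 0 := by nlinarith
  ext <;> assumption

instance : IsDomain EisensteinInt := by
  have : NoZeroDivisors EisensteinInt := ⟨fun {a b} hab => by
    have hnorm : norm a * norm b = 0 := by rw [← map_mul, hab, QuadraticAlgebra.norm_zero]
    exact (mul_eq_zero.1 hnorm).imp eq_zero_of_norm_eq_zero eq_zero_of_norm_eq_zero⟩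
  exact NoZeroDivisors.to_isDomain _

theorem isPrimitiveRoot_omega : IsPrimitiveRoot (ω : EisensteinInt) 3 :=
  (isPrimitiveRoot_three_iff (by norm_num)).2 omega_sq_add_omega_add_one

theorem star_mul_self_of_isUnit {u : EisensteinInt} (hu : IsUnit u) : star u * u = 1 := by
  have hnorm : norm u = 1 :=
    (Int.isUnit_iff.1 (isUnit_iff_norm_isUnit.1 hu)).resolve_right
      fun h => by linarith [norm_nonneg u]
  rw [mul_comm, ← algebraMap_norm_eq_mul_star, hnorm, map_one]

theorem star_mulChar_eq_inv {R : Type*} [CommRing R] (χ : MulChar R EisensteinInt) :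
    star χ = χ⁻¹ := by
  rw [eq_inv_iff_mul_eq_one]
  refine MulChar.ext fun a => ?_
  rw [MulChar.mul_apply, MulChar.one_apply_coe, MulChar.star_apply,
    star_mul_self_of_isUnit (a.isUnit.map χ)]

section RingHom

theorem map_eq_re_add_im_mul {A : Type*} [CommRing A] (f : EisensteinInt →+* A)
    (z : EisensteinInt) : f z = z.re + z.im * f ω := by
  have hz : z = z.re + z.im * (ω : EisensteinInt) := by ext <;> simp
  conv_lhs => rw [hz]
  simp

theorem map_omega_sq_add_map_omega_add_one {A : Type*} [CommRing A] (f : EisensteinInt →+* A) :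
    f ω ^ 2 + f ω + 1 = 0 := by
  simpa using congrArg f omega_sq_add_omega_add_one

theorem exists_ringHom_omega_eq {A : Type*} [CommRing A] {r : A} (hr : r ^ 2 + r + 1 = 0) :
    ∃ f : EisensteinInt →+* A, f ω = r :=
  ⟨(QuadraticAlgebra.lift (R := ℤ) (a := -1) (b := -1)
    ⟨r, by
      simp only [neg_smul, one_smul]
      linear_combination hr⟩ : EisensteinInt →ₐ[ℤ] A).toRingHom, by simp⟩

variable {K : Type*} [Field K] (f : EisensteinInt →+* K) (h3 : (3 : K) ≠ 0)

include h3 in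
theorem isPrimitiveRoot_map_omega : IsPrimitiveRoot (f ω) 3 :=
  (isPrimitiveRoot_three_iff h3).2 (map_omega_sq_add_map_omega_add_one f)

include h3 in
theorem injOn_pow_three_eq_one : Set.InjOn f {z | z ^ 3 = 1} := by
  intro x hx y hy hxy
  obtain ⟨i, hi, rfl⟩ := isPrimitiveRoot_omega.eq_pow_of_pow_eq_one hx
  obtain ⟨j, hj, rfl⟩ := isPrimitiveRoot_omega.eq_pow_of_pow_eq_one hy
  rw [map_pow, map_pow] at hxy
  rw [(isPrimitiveRoot_map_omega f h3).pow_inj hi hj hxy]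

end RingHom

section JacobiSum

variable {F : Type*} [Field F] [Fintype F] {χ : MulChar F EisensteinInt}

theorem jacobiSum_inv_inv (χ : MulChar F EisensteinInt) :
    jacobiSum χ⁻¹ χ⁻¹ = star (jacobiSum χ χ) := by
  rw [← star_mulChar_eq_inv]
  exact jacobiSum_ringHomComp χ χ (starRingEnd EisensteinInt)

theorem norm_jacobiSum (hχ : χ ^ 3 = 1) (hχ1 : χ ≠ 1) :
    norm (jacobiSum χ χ) = Fintype.card F := by
  let i := algebraMap EisensteinInt (FractionRing EisensteinInt)
  have hi : Function.Injective i := IsFractionRing.injective _ _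
  have : CharZero (FractionRing EisensteinInt) := charZero_of_injective_algebraMap hi
  have hchar : ringChar (FractionRing EisensteinInt) ≠ ringChar F := by
    rw [ringChar.eq_zero]
    exact (CharP.ringChar_ne_zero_of_finite F).symm
  have hχsq : χ * χ ≠ 1 := fun h => hχ1 (by rwa [pow_succ, sq, h, one_mul] at hχ)
  have hχi := (MulChar.ringHomComp_ne_one_iff hi).2 hχ1
  have hχsqi := (MulChar.ringHomComp_ne_one_iff hi).2 hχsq
  have hmul : jacobiSum χ χ * star (jacobiSum χ χ) = Fintype.card F := by
    apply hi
    rw [← jacobiSum_inv_inv, map_mul, ← jacobiSum_ringHomComp, ← jacobiSum_ringHomComp,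
      ← MulChar.ringHomComp_inv, map_natCast]
    exact jacobiSum_mul_jacobiSum_inv hchar hχi hχi (by rwa [← MulChar.ringHomComp_mul])
  rw [← algebraMap_norm_eq_mul_star] at hmul
  simpa using congrArg QuadraticAlgebra.re hmul

theorem three_dvd_im_jacobiSum (hF : 3 ∣ Fintype.card F - 1) (hχ : χ ^ 3 = 1) :
    3 ∣ (jacobiSum χ χ).im := by
  classical
  obtain ⟨z, -, hz⟩ :=
    exists_jacobiSum_eq_neg_one_add (by norm_num) hχ hχ hF isPrimitiveRoot_omega
  have hsq : ((ω : EisensteinInt) - 1) ^ 2 = 3 * -ω := by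
    linear_combination omega_sq_add_omega_add_one
  have hJ : jacobiSum χ χ = (3 : ℤ) • (-z * ω) - 1 := by
    rw [hz, zsmul_eq_mul, Int.cast_ofNat]
    linear_combination z * hsq
  rw [hJ, im_sub, im_smul, im_one, sub_zero, smul_eq_mul]
  exact dvd_mul_right 3 _

end JacobiSum

/-- `π` is, up to sign, a primary element of norm `p`. -/
structure IsPrimaryOver (π : EisensteinInt) (p : ℕ) : Prop where
  norm_eq : norm π = p
  three_dvd_im : 3 ∣ π.im

theorem natCast_dvd_star_mul {p : ℕ} {φ : EisensteinInt →+* ZMod p} {x y : EisensteinInt}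
    (hx : φ x = 0) (hy : φ y = 0) : (p : EisensteinInt) ∣ star x * y := by
  have hω := map_omega_sq_add_map_omega_add_one φ
  rw [map_eq_re_add_im_mul] at hx hy
  obtain ⟨k, hk⟩ : (p : ℤ) ∣ (star x * y).re := by
    rw [← ZMod.intCast_zmod_eq_zero_iff_dvd, re_star_mul]
    push_cast
    linear_combination (x.re - x.im : ZMod p) * hy - (y.im * φ ω : ZMod p) * hx +
      (x.im * y.im : ZMod p) * hω
  obtain ⟨l, hl⟩ : (p : ℤ) ∣ (star x * y).im := by
    rw [← ZMod.intCast_zmod_eq_zero_iff_dvd, im_star_mul]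
    push_cast
    linear_combination (-x.im : ZMod p) * hy + y.im * hx
  exact ⟨⟨k, l⟩, by ext <;> simp [hk, hl]⟩

theorem eq_one_or_eq_neg_one_of_three_dvd_im {u : EisensteinInt} (hu : norm u = 1)
    (him : 3 ∣ u.im) : u = 1 ∨ u = -1 := by
  have h4 := four_mul_norm u
  obtain ⟨k, hk⟩ := him
  rw [hu, hk] at h4
  have hk0 : k = 0 := by nlinarith [sq_nonneg (2 * u.re - 3 * k)]
  have hre : u.re = 1 ∨ u.re = -1 := sq_eq_one_iff.1 (by subst hk0; linarith)
  refine hre.imp (fun h => ?_) (fun h => ?_) <;> ext <;> simp [h, hk, hk0]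

namespace IsPrimaryOver

variable {p : ℕ} {π z : EisensteinInt}

theorem not_three_dvd_re (hπ : IsPrimaryOver π p) (hp : ¬ 3 ∣ p) : ¬ 3 ∣ π.re := by
  intro hre
  have hnorm := hπ.norm_eq
  rw [EisensteinInt.norm_eq] at hnorm
  have : (3 : ℤ) ∣ p := by
    rw [← hnorm]
    exact ((hre.pow two_ne_zero).sub (hre.mul_right _)).add (hπ.three_dvd_im.pow two_ne_zero)
  exact hp (mod_cast this)

theorem eq_or_eq_neg (hπ : IsPrimaryOver π p) (hz : IsPrimaryOver z p) (hp : ¬ 3 ∣ p)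
    {φ : EisensteinInt →+* ZMod p} (hφπ : φ π = 0) (hφz : φ z = 0) : z = π ∨ z = -π := by
  have hp0 : p ≠ 0 := by rintro rfl; simp at hp
  obtain ⟨u, hu⟩ := natCast_dvd_star_mul hφπ hφz
  have hzu : z = π * u := by
    apply mul_left_cancel₀ (Nat.cast_ne_zero.2 hp0 : (p : EisensteinInt) ≠ 0)
    have hmul := algebraMap_norm_eq_mul_star π
    rw [hπ.norm_eq, map_natCast] at hmul
    linear_combination z * hmul + π * hu
  have hnorm : norm u = 1 := by
    have := congrArg QuadraticAlgebra.norm hzu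
    rw [map_mul, hπ.norm_eq, hz.norm_eq] at this
    exact (mul_eq_left₀ (mod_cast hp0)).1 this.symm
  have him : 3 ∣ u.im := by
    have hre : 3 ∣ π.re * u.im := by
      have : π.re * u.im = z.im - π.im * (u.re - u.im) := by
        rw [hzu, im_mul]
        ring
      rw [this]
      exact hz.three_dvd_im.sub (hπ.three_dvd_im.mul_right _)
    exact (Int.prime_three.dvd_mul.1 hre).resolve_left (hπ.not_three_dvd_re hp)
  rw [hzu]
  exact (eq_one_or_eq_neg_one_of_three_dvd_im hnorm him).imp (by simp +contextual)
    (by simp +contextual)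

theorem map_ne_zero (hπ : IsPrimaryOver π p) {A : Type*} [CommRing A] (f : EisensteinInt →+* A)
    (hp : (p : A) ≠ 0) : f π ≠ 0 := by
  have hmul := congrArg f (algebraMap_norm_eq_mul_star π)
  rw [hπ.norm_eq, map_natCast, map_natCast, map_mul] at hmul
  exact left_ne_zero_of_mul (hmul ▸ hp)

theorem natCast_not_dvd_im (hπ : IsPrimaryOver π p) (hp : p.Prime) : ¬ (p : ℤ) ∣ π.im := by
  have hp' : Prime (p : ℤ) := Nat.prime_iff_prime_int.1 hp
  have hnorm := hπ.norm_eq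
  rw [EisensteinInt.norm_eq] at hnorm
  intro him
  have hre : (p : ℤ) ∣ π.re := by
    refine hp'.dvd_of_dvd_pow (n := 2) ?_
    rw [show π.re ^ 2 = p + (π.re - π.im) * π.im by linear_combination hnorm]
    exact dvd_rfl.add (him.mul_left _)
  have hsq : (p : ℤ) * p ∣ p * 1 := by
    rw [mul_one]
    nth_rw 3 [← hnorm]
    simp only [sq]
    exact ((mul_dvd_mul hre hre).sub (mul_dvd_mul hre him)).add (mul_dvd_mul him him)
  exact hp'.not_isUnit (isUnit_of_dvd_one (Int.dvd_of_mul_dvd_mul_left hp'.ne_zero hsq))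

theorem exists_ringHom_map_eq_zero [Fact p.Prime] (hπ : IsPrimaryOver π p) :
    ∃ φ : EisensteinInt →+* ZMod p, φ π = 0 ∧ φ ω = -π.re * (π.im : ZMod p)⁻¹ := by
  have him : (π.im : ZMod p) ≠ 0 := by
    rw [Ne, ZMod.intCast_zmod_eq_zero_iff_dvd]
    exact hπ.natCast_not_dvd_im Fact.out
  have hnorm : (π.re : ZMod p) ^ 2 - π.re * π.im + π.im ^ 2 = 0 := by
    have h := congrArg (Int.cast : ℤ → ZMod p) (hπ.norm_eq.symm.trans (EisensteinInt.norm_eq π))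
    push_cast at h
    rw [← h, CharP.cast_eq_zero]
  obtain ⟨φ, hφ⟩ := exists_ringHom_omega_eq (r := -π.re * (π.im : ZMod p)⁻¹) (by
    field_simp
    linear_combination hnorm)
  refine ⟨φ, ?_, hφ⟩
  rw [map_eq_re_add_im_mul, hφ]
  field_simp
  ring

protected theorem star (hπ : IsPrimaryOver π p) : IsPrimaryOver (star π) p where
  norm_eq := by rw [QuadraticAlgebra.norm_star, hπ.norm_eq]
  three_dvd_im := by simpa using hπ.three_dvd_im

end IsPrimaryOver

/-- `χ` is the cubic residue character belonging to the reduction map `φ`. Its values are kept in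
`ℤ[ω]`, so that they can be reduced modulo a second prime. -/
structure IsCubicResidueChar {p : ℕ} (φ : EisensteinInt →+* ZMod p)
    (χ : MulChar (ZMod p) EisensteinInt) : Prop where
  orderOf_eq_three : orderOf χ = 3
  map_apply : ∀ a, φ (χ a) = a ^ ((p - 1) / 3)

theorem three_ne_zero_zmod {p : ℕ} [Fact p.Prime] (hp3 : p % 3 = 1) : (3 : ZMod p) ≠ 0 :=
  mod_cast CharP.cast_ne_zero_of_ne_of_prime (ZMod p) Nat.prime_three (by omega : p ≠ 3)

theorem exists_isCubicResidueChar {p : ℕ} [Fact p.Prime] (hp3 : p % 3 = 1)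
    (φ : EisensteinInt →+* ZMod p) : ∃ χ, IsCubicResidueChar φ χ := by
  obtain ⟨n, hn⟩ : ∃ n, p - 1 = 3 * n := ⟨(p - 1) / 3, by omega⟩
  have hp2 := (Fact.out : p.Prime).two_le
  have h3 : (3 : ZMod p) ≠ 0 := three_ne_zero_zmod hp3
  obtain ⟨g, hg⟩ := IsCyclic.exists_generator (α := (ZMod p)ˣ)
  have hgn_cube : ((g : ZMod p) ^ n) ^ 3 = 1 := by
    rw [← pow_mul, mul_comm, ← hn, ZMod.pow_card_sub_one_eq_one g.ne_zero]
  have hgn_ne_one : (g : ZMod p) ^ n ≠ 1 := by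
    have horder := orderOf_eq_card_of_forall_mem_zpowers hg
    rw [Nat.card_eq_fintype_card, ZMod.card_units] at horder
    rw [← Units.val_pow_eq_pow_val, Ne, Units.val_eq_one]
    exact pow_ne_one_of_lt_orderOf (by omega) (by omega)
  obtain ⟨i, -, hi⟩ := (isPrimitiveRoot_map_omega φ h3).eq_pow_of_pow_eq_one hgn_cube
  have hζ_cube : ((ω : EisensteinInt) ^ i) ^ 3 = 1 := by
    rw [pow_right_comm, isPrimitiveRoot_omega.pow_eq_one, one_pow]
  let ζ := Units.ofPowEqOne _ 3 hζ_cube three_ne_zero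
  have hζ : ζ ∈ rootsOfUnity (Fintype.card (ZMod p)ˣ) EisensteinInt := by
    rw [mem_rootsOfUnity, ZMod.card_units, hn, pow_mul]
    simp [ζ]
  let χ := MulChar.ofRootOfUnity hζ hg
  have hχg : χ g = (ω : EisensteinInt) ^ i := MulChar.ofRootOfUnity_spec hζ hg
  have hφχg : φ (χ g) = (g : ZMod p) ^ n := by rw [hχg, map_pow, hi]
  refine ⟨χ, orderOf_eq_prime ?_ ?_, fun a => ?_⟩
  · rw [MulChar.eq_iff hg, MulChar.pow_apply_coe, hχg, hζ_cube, MulChar.one_apply_coe]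
  · intro h
    rw [h, MulChar.one_apply_coe, map_one] at hφχg
    exact hgn_ne_one hφχg.symm
  · rw [hn, Nat.mul_div_cancel_left _ three_pos]
    rcases eq_or_ne a 0 with rfl | ha
    · rw [MulChar.map_zero, map_zero, zero_pow (by omega)]
    · lift a to (ZMod p)ˣ using ha.isUnit
      obtain ⟨k, rfl⟩ := mem_powers_iff_mem_zpowers.2 (hg a)
      rw [Units.val_pow_eq_pow_val, map_pow, map_pow, hφχg, pow_right_comm]

namespace IsCubicResidueChar

variable {p : ℕ} {φ : EisensteinInt →+* ZMod p} {χ : MulChar (ZMod p) EisensteinInt}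

theorem pow_three (hχ : IsCubicResidueChar φ χ) : χ ^ 3 = 1 := by
  rw [← hχ.orderOf_eq_three, pow_orderOf_eq_one]

theorem ne_one (hχ : IsCubicResidueChar φ χ) : χ ≠ 1 := by
  rw [Ne, ← orderOf_eq_one_iff, hχ.orderOf_eq_three]
  norm_num

variable [Fact p.Prime]

theorem mod_three_eq_one (hχ : IsCubicResidueChar φ χ) : p % 3 = 1 := by
  have hdvd := χ.orderOf_dvd_card_sub_one
  rw [hχ.orderOf_eq_three, ZMod.card] at hdvd
  have := (Fact.out : p.Prime).two_le
  omega

theorem apply_pow_three (hχ : IsCubicResidueChar φ χ) {a : ZMod p} (ha : a ≠ 0) :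
    χ a ^ 3 = 1 := by
  rw [← MulChar.pow_apply' _ three_ne_zero, hχ.pow_three, MulChar.one_apply ha.isUnit]

theorem apply_eq_omega_iff (hχ : IsCubicResidueChar φ χ) {a : ZMod p} (ha : a ≠ 0) :
    χ a = ω ↔ a ^ ((p - 1) / 3) = φ ω := by
  rw [← hχ.map_apply, (injOn_pow_three_eq_one φ (three_ne_zero_zmod hχ.mod_three_eq_one)).eq_iff
    (hχ.apply_pow_three ha) isPrimitiveRoot_omega.pow_eq_one]

theorem map_jacobiSum (hχ : IsCubicResidueChar φ χ) : φ (jacobiSum χ χ) = 0 := by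
  let P : Polynomial (ZMod p) :=
    Polynomial.X ^ ((p - 1) / 3) * (1 - Polynomial.X) ^ ((p - 1) / 3)
  have hp2 := (Fact.out : p.Prime).two_le
  have hP : P.natDegree < Fintype.card (ZMod p) - 1 := by
    rw [ZMod.card]
    refine lt_of_le_of_lt (b := (p - 1) / 3 + (p - 1) / 3) ?_ (by omega)
    simp only [P]
    compute_degree
  rw [jacobiSum, map_sum, ← sum_eval_eq_zero_of_natDegree_lt hP]
  exact Finset.sum_congr rfl fun a _ => by simp [P, hχ.map_apply]

theorem isPrimaryOver_jacobiSum (hχ : IsCubicResidueChar φ χ) :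
    IsPrimaryOver (jacobiSum χ χ) p where
  norm_eq := by rw [norm_jacobiSum hχ.pow_three hχ.ne_one, ZMod.card]
  three_dvd_im := three_dvd_im_jacobiSum
    (hχ.orderOf_eq_three ▸ χ.orderOf_dvd_card_sub_one) hχ.pow_three

theorem map_div_map_star_zpow {K : Type*} [Field K] {q : ℕ} [Fact q.Prime] [CharP K q]
    (hχ : IsCubicResidueChar φ χ) {π : EisensteinInt} (hπ : IsPrimaryOver π p) (hφπ : φ π = 0)
    (hqp : q ≠ p) {n : ℤ} (hn : 3 * n + 1 = q ∨ 3 * n + 1 = -q) (f : EisensteinInt →+* K) :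
    (f π / f (star π)) ^ n = f (χ q) := by
  have hq : (q : ZMod p) ≠ 0 := CharP.cast_ne_zero_of_ne_of_prime _ Fact.out hqp.symm
  have h3 : (3 : K) ≠ 0 :=
    mod_cast CharP.cast_ne_zero_of_ne_of_prime K Nat.prime_three (by omega : q ≠ 3)
  have hp3 : ¬ 3 ∣ p := by have := hχ.mod_three_eq_one; omega
  have hf_pow : χ.ringHomComp f ^ 3 = 1 := by
    rw [MulChar.ringHomComp_pow, hχ.pow_three, MulChar.ringHomComp_one]
  have hf_ne_one : χ.ringHomComp f ≠ 1 := by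
    intro h
    refine hχ.ne_one (MulChar.ext fun a => injOn_pow_three_eq_one f h3
      (hχ.apply_pow_three a.ne_zero) (by simp) ?_)
    simpa using congrArg (fun χ' : MulChar (ZMod p) K => χ' a) h
  have hJ : jacobiSum χ χ = π ∨ jacobiSum χ χ = -π :=
    hπ.eq_or_eq_neg hχ.isPrimaryOver_jacobiSum hp3 hφπ hχ.map_jacobiSum
  have hquot : f π / f (star π) = f (jacobiSum χ χ) / f (star (jacobiSum χ χ)) := by
    rcases hJ with h | h <;> simp [h]
  rw [hquot, ← jacobiSum_inv_inv, ← jacobiSum_ringHomComp, ← jacobiSum_ringHomComp,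
    ← MulChar.ringHomComp_inv, jacobiSum_div_jacobiSum_inv_zpow hq hf_pow hf_ne_one hn,
    MulChar.ringHomComp_apply]

end IsCubicResidueChar

section Parametrization

theorem exists_pow_three_eq_and_ne_one {K : Type*} [Field K] [IsAlgClosed K] {ζ : K}
    (hζ : IsPrimitiveRoot ζ 3) (y : K) : ∃ v, v ^ 3 = y ∧ v ≠ 1 := by
  obtain ⟨v, rfl⟩ := IsAlgClosed.exists_pow_nat_eq y three_pos
  by_cases hv : v = 1
  · exact ⟨ζ, by rw [hv, hζ.pow_eq_one, one_pow], hζ.ne_one (by norm_num)⟩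
  · exact ⟨v, rfl, hv⟩

theorem pow_three_zpow_eq_one_iff {G : Type*} [GroupWithZero G] {v : G} (hv : v ≠ 0) (n : ℤ) :
    (v ^ 3) ^ n = 1 ↔ v ^ (3 * n + 1) = v := by
  rw [zpow_add_one₀ hv, mul_eq_right₀ hv, zpow_mul, zpow_ofNat]

variable {K : Type*} [Field K] {q : ℕ} [Fact q.Prime] [CharP K q] {e : ℤ} {s v : K}

theorem sub_div_add_zpow (he : e = q ∧ s ^ q = s ∨ e = -q ∧ s ^ q = -s) (t : K) :
    ((t - s) / (t + s)) ^ e = (t ^ q - s) / (t ^ q + s) := by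
  rcases he with ⟨rfl, hs⟩ | ⟨rfl, hs⟩
  · rw [zpow_natCast, div_pow, sub_pow_char, add_pow_char, hs]
  · rw [zpow_neg, zpow_natCast, div_pow, sub_pow_char, add_pow_char, hs, inv_div, sub_neg_eq_add,
      ← sub_eq_add_neg]

theorem exists_intCast_of_pow_char_eq_self {t : K} (ht : t ^ q = t) : ∃ m : ℤ, (m : K) = t :=
  (mem_bot_iff_intCast q K).1 ((Subfield.mem_bot_iff_pow_eq_self K q).2 ht)

theorem exists_intCast_sub_div_add_eq (he : e = q ∧ s ^ q = s ∨ e = -q ∧ s ^ q = -s)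
    (hs : 2 * s ≠ 0) (hv0 : v ≠ 0) (hv1 : v ≠ 1) (hv : v ^ e = v) :
    ∃ t : ℤ, ((t : K) - s) / (t + s) = v := by
  have hv1' : 1 - v ≠ 0 := sub_ne_zero.2 hv1.symm
  obtain ⟨t, ht⟩ : ∃ t, t = s * (1 + v) / (1 - v) := ⟨_, rfl⟩
  have hadd : t + s = 2 * s / (1 - v) := by rw [ht]; field_simp; ring
  have hsub : t - s = v * (t + s) := by rw [ht]; field_simp; ring
  have hadd_ne : t + s ≠ 0 := hadd ▸ div_ne_zero hs hv1'
  have htv : (t - s) / (t + s) = v := by rw [hsub, mul_div_cancel_right₀ _ hadd_ne]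
  have hfrob : (t ^ q - s) / (t ^ q + s) = v := by rw [← sub_div_add_zpow he, htv, hv]
  have hfrob_ne : t ^ q + s ≠ 0 := by
    intro h
    rw [h, div_zero] at hfrob
    exact hv0 hfrob.symm
  have hcross : 2 * s * (t ^ q - t) = 0 := by
    rw [← htv, div_eq_div_iff hfrob_ne hadd_ne] at hfrob
    linear_combination hfrob
  obtain ⟨m, rfl⟩ :=
    exists_intCast_of_pow_char_eq_self (sub_eq_zero.1 ((mul_eq_zero.1 hcross).resolve_left hs))
  exact ⟨m, htv⟩

end Parametrization

/-- The square root `ω - ω²` of `-3`. -/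
def sqrtNegThree : EisensteinInt := ⟨1, 2⟩

theorem sqrtNegThree_eq : sqrtNegThree = 2 * ω + 1 := by
  ext <;> simp [sqrtNegThree]

theorem sqrtNegThree_sq : sqrtNegThree ^ 2 = -3 := by
  rw [sqrtNegThree_eq]
  linear_combination 4 * omega_sq_add_omega_add_one

theorem sub_star_eq (z : EisensteinInt) : z - star z = z.im * sqrtNegThree := by
  ext
  · simp [sqrtNegThree]
  · rw [im_sub, im_star, ← zsmul_eq_mul, im_smul, smul_eq_mul, sqrtNegThree]
    ring

theorem add_star_eq (z : EisensteinInt) : z + star z = (2 * z.re - z.im : ℤ) := by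
  ext
  · rw [re_add, re_star, re_intCast, Int.cast_id]
    ring
  · simp

theorem sub_sqrtNegThree_pow_three_mul_sub (t : ℤ) (z : EisensteinInt) :
    ((t : EisensteinInt) - sqrtNegThree) ^ 3 * z - (t + sqrtNegThree) ^ 3 * star z =
      sqrtNegThree * ((t ^ 3 - 9 * t) * z.im - 3 * (t ^ 2 - 1) * (2 * z.re - z.im) : ℤ) := by
  have hadd := add_star_eq z
  push_cast at hadd ⊢
  linear_combination (t ^ 3 - 9 * t : EisensteinInt) * sub_star_eq z -
    3 * (t ^ 2 - 1) * sqrtNegThree * hadd +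
    (3 * t * (z - star z) - sqrtNegThree * (z + star z)) * sqrtNegThree_sq

section Field

variable {K : Type*} [Field K] {q : ℕ} [CharP K q] {n : ℤ} (f : EisensteinInt →+* K)

theorem map_sqrtNegThree_pow_char [Fact q.Prime] (hn : 3 * n + 1 = q ∨ 3 * n + 1 = -q) :
    3 * n + 1 = q ∧ f sqrtNegThree ^ q = f sqrtNegThree ∨
      3 * n + 1 = -q ∧ f sqrtNegThree ^ q = -f sqrtNegThree := by
  have hω := map_omega_sq_add_map_omega_add_one f
  have hω_cube : f ω ^ 3 = 1 := by rw [← map_pow, isPrimitiveRoot_omega.pow_eq_one, map_one]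
  have hω0 : f ω ≠ 0 := by
    intro h
    simp [h] at hω
  have hω_zpow : f ω ^ (3 * n + 1) = f ω := by
    rw [zpow_add_one₀ hω0, zpow_mul, zpow_ofNat, hω_cube, one_zpow, one_mul]
  have hpow : f sqrtNegThree ^ q = 2 * f ω ^ q + 1 := by
    simp only [sqrtNegThree_eq, ← frobenius_def, map_add, map_mul, map_one, map_ofNat]
  have hmap : f sqrtNegThree = 2 * f ω + 1 := by
    simp only [sqrtNegThree_eq, map_add, map_mul, map_one, map_ofNat]
  refine hn.imp (fun h => ⟨h, ?_⟩) (fun h => ⟨h, ?_⟩) <;> rw [h] at hω_zpow <;> rw [hpow, hmap]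
  · rw [zpow_natCast] at hω_zpow
    rw [hω_zpow]
  · have hω_pow : f ω ^ q = f ω ^ 2 := by
      rw [zpow_neg, zpow_natCast, inv_eq_iff_eq_inv] at hω_zpow
      rw [hω_zpow]
      exact inv_eq_of_mul_eq_one_right (by linear_combination hω_cube)
    rw [hω_pow]
    linear_combination 2 * hω

theorem map_sqrtNegThree_ne_zero (h3 : (3 : K) ≠ 0) : f sqrtNegThree ≠ 0 := by
  intro h
  have hsq := congrArg f sqrtNegThree_sq
  rw [map_pow, h, zero_pow two_ne_zero, map_neg, map_ofNat] at hsq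
  exact neg_ne_zero.2 h3 hsq.symm

theorem map_sub_sqrtNegThree_pow_three_iff (h3 : (3 : K) ≠ 0) (t : ℤ) (z : EisensteinInt) :
    ((t : K) - f sqrtNegThree) ^ 3 * f z = (t + f sqrtNegThree) ^ 3 * f (star z) ↔
      (t ^ 3 - 9 * t) * z.im ≡ 3 * (t ^ 2 - 1) * (2 * z.re - z.im) [ZMOD q] := by
  have hdiff := congrArg f (sub_sqrtNegThree_pow_three_mul_sub t z)
  simp only [map_sub, map_mul, map_pow, map_add, map_intCast] at hdiff
  rw [← sub_eq_zero, hdiff, mul_eq_zero, or_iff_right (map_sqrtNegThree_ne_zero f h3),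
    CharP.intCast_eq_zero_iff K q, Int.modEq_comm, Int.modEq_iff_dvd]

theorem map_star_div_map_zpow_eq_one_iff [IsAlgClosed K] [Fact q.Prime] (hq2 : q ≠ 2)
    (hn : 3 * n + 1 = q ∨ 3 * n + 1 = -q) {z : EisensteinInt} (hz : f z ≠ 0)
    (hz_star : f (star z) ≠ 0) :
    (f (star z) / f z) ^ n = 1 ↔
      ∃ t : ℤ, (t ^ 3 - 9 * t) * z.im ≡ 3 * (t ^ 2 - 1) * (2 * z.re - z.im) [ZMOD q] := by
  have h2 : (2 : K) ≠ 0 := mod_cast CharP.cast_ne_zero_of_ne_of_prime K Nat.prime_two hq2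
  have h3 : (3 : K) ≠ 0 :=
    mod_cast CharP.cast_ne_zero_of_ne_of_prime K Nat.prime_three (by omega : q ≠ 3)
  have he := map_sqrtNegThree_pow_char f hn
  have h2s : 2 * f sqrtNegThree ≠ 0 := mul_ne_zero h2 (map_sqrtNegThree_ne_zero f h3)
  have hy : f (star z) / f z ≠ 0 := div_ne_zero hz_star hz
  simp_rw [← map_sub_sqrtNegThree_pow_three_iff (q := q) f h3]
  constructor
  · intro h
    obtain ⟨v, hv, hv1⟩ :=
      exists_pow_three_eq_and_ne_one (isPrimitiveRoot_map_omega f h3) (f (star z) / f z)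
    have hv0 : v ≠ 0 := (pow_ne_zero_iff three_ne_zero).1 (hv ▸ hy)
    rw [← hv, pow_three_zpow_eq_one_iff hv0] at h
    obtain ⟨t, rfl⟩ := exists_intCast_sub_div_add_eq he h2s hv0 hv1 h
    refine ⟨t, ?_⟩
    rw [div_pow, div_eq_div_iff (pow_ne_zero 3 (div_ne_zero_iff.1 hv0).2) hz] at hv
    rw [hv, mul_comm]
  · rintro ⟨t, ht⟩
    have hadd : (t : K) + f sqrtNegThree ≠ 0 := by
      intro h
      have hsub : (t : K) - f sqrtNegThree = -(2 * f sqrtNegThree) := by linear_combination h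
      rw [h, hsub, zero_pow three_ne_zero, zero_mul] at ht
      exact mul_ne_zero (pow_ne_zero 3 (neg_ne_zero.2 h2s)) hz ht
    have hv : (((t : K) - f sqrtNegThree) / (t + f sqrtNegThree)) ^ 3 = f (star z) / f z := by
      rw [div_pow, div_eq_div_iff (pow_ne_zero 3 hadd) hz, ht, mul_comm]
    have hv0 := (pow_ne_zero_iff three_ne_zero).1 (hv ▸ hy)
    rw [← hv, pow_three_zpow_eq_one_iff hv0, sub_div_add_zpow he, ← frobenius_def, map_intCast]

end Field

section Comparison

variable {p p' q : ℕ} [Fact p.Prime] [Fact p'.Prime] [Fact q.Prime]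

theorem exists_three_mul_add_one_eq (hq3 : q ≠ 3) : ∃ n : ℤ, 3 * n + 1 = q ∨ 3 * n + 1 = -q := by
  have hq : ¬ 3 ∣ q := fun h => hq3 ((Nat.prime_dvd_prime_iff_eq Nat.prime_three Fact.out).1 h).symm
  rcases (by omega : q % 3 = 1 ∨ q % 3 = 2) with h | h
  · exact ⟨(q - 1) / 3, by omega⟩
  · exact ⟨(-q - 1) / 3, by omega⟩

theorem IsCubicResidueChar.apply_eq_apply_iff {φ : EisensteinInt →+* ZMod p}
    {φ' : EisensteinInt →+* ZMod p'} {χ : MulChar (ZMod p) EisensteinInt}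
    {χ' : MulChar (ZMod p') EisensteinInt} {π π' : EisensteinInt}
    (hχ : IsCubicResidueChar φ χ) (hπ : IsPrimaryOver π p) (hφ : φ π = 0)
    (hχ' : IsCubicResidueChar φ' χ') (hπ' : IsPrimaryOver π' p') (hφ' : φ' π' = 0)
    (hqp : q ≠ p) (hqp' : q ≠ p') (hq2 : q ≠ 2) (hq3 : q ≠ 3) :
    χ q = χ' q ↔ ∃ t : ℤ, (t ^ 3 - 9 * t) * (star π * π').im ≡
      3 * (t ^ 2 - 1) * (2 * (star π * π').re - (star π * π').im) [ZMOD q] := by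
  let K := AlgebraicClosure (ZMod q)
  have h3 : (3 : K) ≠ 0 := mod_cast CharP.cast_ne_zero_of_ne_of_prime K Nat.prime_three hq3
  have hpK : (p : K) ≠ 0 := CharP.cast_ne_zero_of_ne_of_prime K Fact.out hqp
  have hpK' : (p' : K) ≠ 0 := CharP.cast_ne_zero_of_ne_of_prime K Fact.out hqp'
  have hq : (q : ZMod p) ≠ 0 := CharP.cast_ne_zero_of_ne_of_prime _ Fact.out hqp.symm
  have hq' : (q : ZMod p') ≠ 0 := CharP.cast_ne_zero_of_ne_of_prime _ Fact.out hqp'.symm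
  have : NeZero ((3 : ℕ) : K) := ⟨mod_cast h3⟩
  obtain ⟨ζ, hζ⟩ := HasEnoughRootsOfUnity.exists_primitiveRoot K 3
  obtain ⟨f, -⟩ := exists_ringHom_omega_eq ((isPrimitiveRoot_three_iff h3).1 hζ)
  obtain ⟨n, hn⟩ := exists_three_mul_add_one_eq hq3
  have hquot : f (star (star π * π')) / f (star π * π') =
      (f π / f (star π)) / (f π' / f (star π')) := by
    simp only [star_mul', star_star, map_mul]
    rw [div_div_div_eq]
  rw [← map_star_div_map_zpow_eq_one_iff f hq2 hn
    (by simp [hπ.star.map_ne_zero f hpK, hπ'.map_ne_zero f hpK'])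
    (by simp [hπ.map_ne_zero f hpK, hπ'.star.map_ne_zero f hpK']), hquot, div_zpow,
    hχ.map_div_map_star_zpow hπ hφ hqp hn, hχ'.map_div_map_star_zpow hπ' hφ' hqp' hn,
    div_eq_one_iff_eq, (injOn_pow_three_eq_one f h3).eq_iff]
  · exact hχ.apply_pow_three hq
  · exact hχ'.apply_pow_three hq'
  · exact ((hq'.isUnit.map χ').map f).ne_zero

end Comparison

section Seven

local instance : Fact (Nat.Prime 7) := ⟨by norm_num⟩

theorem isPrimaryOver_seven : IsPrimaryOver ⟨2, 3⟩ 7 where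
  norm_eq := by rw [EisensteinInt.norm_eq]; norm_num
  three_dvd_im := dvd_rfl

theorem IsCubicResidueChar.apply_eq_omega_of_seven {φ : EisensteinInt →+* ZMod 7}
    {χ : MulChar (ZMod 7) EisensteinInt} (hχ : IsCubicResidueChar φ χ) (hφ : φ ⟨2, 3⟩ = 0) {q : ℕ}
    (hq : q % 7 = 2 ∨ q % 7 = 5) : χ q = ω := by
  have hφω : φ ω = 4 := by
    rw [map_eq_re_add_im_mul] at hφ
    push_cast at hφ
    generalize φ ω = r at hφ ⊢
    decide +revert
  have hq' : (q : ZMod 7) = 2 ∨ (q : ZMod 7) = 5 := by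
    refine hq.imp (fun h => ?_) (fun h => ?_) <;> rw [← ZMod.natCast_mod, h] <;> rfl
  rw [hχ.apply_eq_omega_iff (by rcases hq' with h | h <;> rw [h] <;> decide), hφω]
  rcases hq' with h | h <;> rw [h] <;> decide

theorem modEq_star_mul_seven_iff {q : ℕ} (hq : q.Prime) (hq2 : q ≠ 2) (hq3 : q ≠ 3)
    {π : EisensteinInt} {M : ℤ} (hM : π.im = 3 * M) (t : ℤ) :
    (t ^ 3 - 9 * t) * (star π * ⟨2, 3⟩).im ≡
        3 * (t ^ 2 - 1) * (2 * (star π * ⟨2, 3⟩).re - (star π * ⟨2, 3⟩).im) [ZMOD q] ↔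
      (t ^ 3 - t ^ 2 - 9 * t + 1) * (2 * π.re - π.im) ≡
        (t ^ 3 + 27 * t ^ 2 - 9 * t - 27) * M [ZMOD q] := by
  have hq' : Prime (q : ℤ) := Nat.prime_iff_prime_int.1 hq
  have not_dvd {r : ℕ} (hr : r.Prime) (hqr : q ≠ r) : ¬ (q : ℤ) ∣ r :=
    fun h => hqr ((Nat.prime_dvd_prime_iff_eq hq hr).1 (mod_cast h))
  have hre : (star π * ⟨2, 3⟩).re = 2 * π.re + 3 * M := by
    rw [re_star_mul, hM]
    ring
  have him : (star π * ⟨2, 3⟩).im = 3 * (π.re - 2 * M) := by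
    rw [im_star_mul, hM]
    ring
  obtain ⟨X, hX⟩ : ∃ X, X = (t ^ 2 - 1) * (π.re + 12 * M) - (t ^ 3 - 9 * t) * (π.re - 2 * M) :=
    ⟨_, rfl⟩
  rw [Int.modEq_iff_dvd, Int.modEq_iff_dvd, hre, him, hM,
    show 3 * (t ^ 2 - 1) * (2 * (2 * π.re + 3 * M) - 3 * (π.re - 2 * M)) -
      (t ^ 3 - 9 * t) * (3 * (π.re - 2 * M)) = (3 : ℕ) * X by push_cast; rw [hX]; ring,
    show (t ^ 3 + 27 * t ^ 2 - 9 * t - 27) * M -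
      (t ^ 3 - t ^ 2 - 9 * t + 1) * (2 * π.re - 3 * M) = (2 : ℕ) * X by push_cast; rw [hX]; ring,
    hq'.dvd_mul, hq'.dvd_mul, or_iff_right (not_dvd Nat.prime_three hq3),
    or_iff_right (not_dvd Nat.prime_two hq2)]

end Seven

theorem exists_isPrimaryOver {p : ℕ} {L M : ℤ} (h : (4 * p : ℤ) = L ^ 2 + 27 * M ^ 2) :
    ∃ π, IsPrimaryOver π p ∧ 2 * π.re - π.im = L ∧ π.im = 3 * M := by
  have hpar : Even (L + 3 * M) := by
    have : Even (L ^ 2 + 27 * M ^ 2) := ⟨2 * p, by rw [← h]; ring⟩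
    have h27 : ¬ Even (27 : ℤ) := by decide
    have h3 : ¬ Even (3 : ℤ) := by decide
    simp only [Int.even_add, Int.even_mul, Int.even_pow, h27, h3] at this ⊢
    simpa using this
  obtain ⟨a, ha⟩ := hpar
  refine ⟨⟨a, 3 * M⟩, ⟨?_, dvd_mul_right 3 M⟩, by linarith, rfl⟩
  have h4 := four_mul_norm ⟨a, 3 * M⟩
  have hL : 2 * a - 3 * M = L := by linarith
  simp only [hL] at h4
  linarith

end EisensteinInt

open EisensteinInt QuadraticAlgebra

/-- Changing the sign of `M` replaces `π` by its conjugate, so this also decides `χ(q) = ω²`. -/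
theorem rule_e_plus_general (p : ℕ) (hp : p.Prime) (hp3 : p % 3 = 1)
    (L M : ℤ) (h : (4 * p : ℤ) = L ^ 2 + 27 * M ^ 2)
    (q : ℕ) (hq : q.Prime) (hq5 : 5 ≤ q) (hqp : q ≠ p)
    (hq7 : q % 7 = 2 ∨ q % 7 = 5) :
    ((q : ZMod p) ^ ((p - 1) / 3) =
        ((-(L + 3 * M) : ℤ) : ZMod p) * (((6 * M : ℤ) : ZMod p))⁻¹) ↔
      ∃ t : ℤ, (t ^ 3 - t ^ 2 - 9 * t + 1) * L ≡
        (t ^ 3 + 27 * t ^ 2 - 9 * t - 27) * M [ZMOD (q : ℤ)] := by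
  have : Fact p.Prime := ⟨hp⟩
  have : Fact q.Prime := ⟨hq⟩
  have : Fact (Nat.Prime 7) := ⟨by norm_num⟩
  obtain ⟨π, hπ, rfl, hM⟩ := exists_isPrimaryOver h
  obtain ⟨φ, hφ, hφω⟩ := hπ.exists_ringHom_map_eq_zero
  obtain ⟨φ₇, hφ₇, -⟩ := isPrimaryOver_seven.exists_ringHom_map_eq_zero
  obtain ⟨χ, hχ⟩ := exists_isCubicResidueChar hp3 φ
  obtain ⟨χ₇, hχ₇⟩ := exists_isCubicResidueChar (by norm_num) φ₇
  have hqp0 : (q : ZMod p) ≠ 0 := CharP.cast_ne_zero_of_ne_of_prime _ hq hqp.symm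
  have hω : ((-(2 * π.re - π.im + 3 * M) : ℤ) : ZMod p) * ((6 * M : ℤ) : ZMod p)⁻¹ = φ ω := by
    have h2 : (2 : ZMod p) ≠ 0 :=
      mod_cast CharP.cast_ne_zero_of_ne_of_prime (ZMod p) Nat.prime_two (by omega : p ≠ 2)
    rw [hφω, hM, show -(2 * π.re - 3 * M + 3 * M) = 2 * -π.re by ring,
      show 6 * M = 2 * (3 * M) by ring]
    push_cast
    rw [← div_eq_mul_inv, ← div_eq_mul_inv, mul_div_mul_left _ _ h2]
  rw [hω, ← hχ.apply_eq_omega_iff hqp0, ← hχ₇.apply_eq_omega_of_seven hφ₇ hq7,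
    hχ.apply_eq_apply_iff hπ hφ hχ₇ isPrimaryOver_seven hφ₇ hqp (by omega) (by omega) (by omega)]
  exact exists_congr fun t => modEq_star_mul_seven_iff hq (by omega) (by omega) hM t

/-- Rule (e) with the plus sign: for a prime `q ≥ 5`, `q ≡ ±2 (mod 7)`, `q ≠ p`,
`F_q(L,M) = ω` iff `(t³−t²−9t+1)L ≡ (t³+27t²−9t−27)M (mod q)` for some `t`. -/
theorem rule_e_plus (p : ℕ) (hp : p.Prime) (hp3 : p % 3 = 1)
    (L M : ℤ) (hL : 0 < L) (hM : 0 < M) (h : (4 * p : ℤ) = L ^ 2 + 27 * M ^ 2)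
    (q : ℕ) (hq : q.Prime) (hq5 : 5 ≤ q) (hqp : q ≠ p)
    (hq7 : q % 7 = 2 ∨ q % 7 = 5) :
    ((q : ZMod p) ^ ((p - 1) / 3) =
        ((-(L + 3 * M) : ℤ) : ZMod p) * (((6 * M : ℤ) : ZMod p))⁻¹) ↔
      ∃ t : ℤ, (t ^ 3 - t ^ 2 - 9 * t + 1) * L ≡
        (t ^ 3 + 27 * t ^ 2 - 9 * t - 27) * M [ZMOD (q : ℤ)] :=
  rule_e_plus_general p hp hp3 L M h q hq hq5 hqp hq7
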